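/- Let μ ≥ 1, and in ℤ^4 set Δ_1 = (1,−1,−1,−1), Δ_2 = (−1,1,−1,0), Δ_3 = (−1,0,1,−1) and Δ_4 = (−1,−1,0,1). Then Δ_4(Δ_3(Δ_2(Δ_1(2·R_μ)))) ⊇ R_{2μ+1} in ℕ^4. -/

import Mathlib

/-!
Only the hyperplanes of degree (coordinate sum) near `2μ` matter. The set `2·R_μ` consists of the
points whose degree minus number of odd coordinates is at most `2μ - 2`. Compared with `R_{2μ+1}`,
which is the set of points of degree at most `2μ`, it therefore

* misses exactly the points of degree `2μ` with all coordinates even (the *defects*), and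
* contains in addition the points of degree `2μ + 1` with three odd coordinates and those of
  degree `2μ + 2` with four odd coordinates (the *extras*).

Each `Δ_k` lowers the degree, so all points strictly above a defect are present, and a defect `p`
is repaired as soon as `p - Δ_k` is an extra (`mem_deltaOf_of_above_of_below`).

* `Δ_1` repairs the defects with first coordinate `≠ 0`, by the four-odd extras.
* `Δ_2` repairs those of the form `(0, b, c, d)` with `b ≠ 0`, by `(1, b - 1, c + 1, d)`.
* `Δ_3` repairs `(0, 0, c, d)` with `c ≠ 0`, by `(1, 0, c - 1, d + 1)`.
* `Δ_4` repairs the last defect `(0, 0, 0, 2μ)`, by `(1, 1, 0, 2μ - 1)`.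

The extras used at different stages are different, so none is consumed before it is needed.
`stage₁`, `stage₂`, `stage₃` are lower bounds for the three intermediate sets which record the
remaining defects and the extras still needed; each is contained in the specialization of any set
that contains the previous one.
-/

/-- Componentwise coercion `ℕ^d → ℤ^d`. -/
def toInt {d : ℕ} (p : Fin d → ℕ) : Fin d → ℤ := fun i => (p i : ℤ)

/-- A staircase in `ℕ^d`: a subset whose complement is stable under addition
(equivalently, a downward closed subset). -/
def IsStaircase {d : ℕ} (E : Set (Fin d → ℕ)) : Prop :=
  ∀ x, x ∉ E → ∀ y : Fin d → ℕ, x + y ∉ E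

/-- The regular staircase `R_μ = {α ∈ ℕ^d : α₁ + ⋯ + α_d < μ}`. -/
def regStaircase (d μ : ℕ) : Set (Fin d → ℕ) := {α | ∑ i, α i < μ}

/-- The scaled staircase `(a₁,…,a_d)·E = {m ∈ ℕ^d : (⌊m₁/a₁⌋,…,⌊m_d/a_d⌋) ∈ E}`. -/
def scaleSet {d : ℕ} (a : Fin d → ℕ) (E : Set (Fin d → ℕ)) : Set (Fin d → ℕ) :=
  {m | (fun i => m i / a i) ∈ E}

/-- The points of `ℕ^d` on the line through `p` with direction `Δ`. -/
def lineThrough {d : ℕ} (Δ : Fin d → ℤ) (p : Fin d → ℕ) : Set (Fin d → ℕ) :=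
  {q | ∃ t : ℤ, toInt q = toInt p + t • Δ}

/-- The specialization `Δ(E)` of a (finite) subset `E ⊆ ℕ^d` along the direction `Δ`:
`p ∈ Δ(E)` iff the number of integers `i > 0` with `p + iΔ ∈ ℕ^d` is strictly smaller
than `#(E ∩ L_p)`, where `L_p` is the line through `p` with direction `Δ`.  Equivalently,
on each line `L` with direction `Δ`, `Δ(E) ∩ L` consists of the `#(E ∩ L)` largest
elements of `L ∩ ℕ^d` for the order `m < m'` iff `m' = m + iΔ`, `i > 0`. -/
def deltaOf {d : ℕ} (Δ : Fin d → ℤ) (E : Set (Fin d → ℕ)) : Set (Fin d → ℕ) :=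
  {p | Set.ncard {i : ℕ | 0 < i ∧ ∃ q : Fin d → ℕ, toInt q = toInt p + (i : ℤ) • Δ}
        < Set.ncard (E ∩ lineThrough Δ p)}

/-- `Δ ∈ ℤ^d` is admissible if some coordinate equals `1`, all the others are `≤ 0`,
and at least one coordinate besides the `1` is nonzero. -/
def IsAdmissible {d : ℕ} (Δ : Fin d → ℤ) : Prop :=
  ∃ i, Δ i = 1 ∧ (∀ k, k ≠ i → Δ k ≤ 0) ∧ ∃ j, j ≠ i ∧ Δ j ≠ 0

theorem toInt_injective {d : ℕ} : Function.Injective (toInt (d := d)) := by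
  intro p q h
  funext i
  exact Int.ofNat.inj (congrFun h i)

theorem lineThrough_finite {d : ℕ} {Δ : Fin d → ℤ} (hpos : ∃ i, 0 < Δ i) (hneg : ∃ j, Δ j < 0)
    (p : Fin d → ℕ) : (lineThrough Δ p).Finite := by
  obtain ⟨i, hi⟩ := hpos
  obtain ⟨j, hj⟩ := hneg
  refine (((Set.finite_Icc (-(p i : ℤ)) (p j : ℤ)).image
    (fun t : ℤ => toInt p + t • Δ)).preimage toInt_injective.injOn).subset ?_
  rintro q ⟨t, ht⟩
  refine ⟨t, ⟨?_, ?_⟩, ht.symm⟩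
  · have h := congrFun ht i
    simp only [toInt, Pi.add_apply, Pi.smul_apply, smul_eq_mul] at h
    by_contra! hlt
    nlinarith [Int.natCast_nonneg (q i), Int.natCast_nonneg (p i)]
  · have h := congrFun ht j
    simp only [toInt, Pi.add_apply, Pi.smul_apply, smul_eq_mul] at h
    by_contra! hlt
    nlinarith [Int.natCast_nonneg (q j), Int.natCast_nonneg (p j)]

/-- If every point strictly above `p` on its line lies in `E`, and so does some point `r` which is
`p` or lies below `p`, then `p ∈ Δ(E)`: the points above `p` inject into `E ∩ L_p` missing `r`. -/
theorem mem_deltaOf_of_above_of_below {d : ℕ} {Δ : Fin d → ℤ} (hpos : ∃ i, 0 < Δ i)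
    (hneg : ∃ j, Δ j < 0) {E : Set (Fin d → ℕ)} {p : Fin d → ℕ}
    (above : ∀ q : Fin d → ℕ, ∀ i : ℤ, 0 < i → toInt q = toInt p + i • Δ → q ∈ E)
    (below : ∃ r ∈ E, ∃ j : ℤ, j ≤ 0 ∧ toInt r = toInt p + j • Δ) :
    p ∈ deltaOf Δ E := by
  obtain ⟨r, hrE, j, hj, hr⟩ := below
  have hinj : ∀ s t : ℤ, toInt p + s • Δ = toInt p + t • Δ → s = t := by
    intro s t h
    obtain ⟨k, hk⟩ := hpos
    have h' := congrFun h k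
    simp only [Pi.add_apply, Pi.smul_apply, smul_eq_mul, add_right_inj] at h'
    exact mul_right_cancel₀ hk.ne' h'
  have hfin : (E ∩ lineThrough Δ p).Finite :=
    (lineThrough_finite hpos hneg p).subset Set.inter_subset_right
  refine lt_of_le_of_lt ?_ (Set.ncard_sdiff_singleton_lt_of_mem
    (show r ∈ E ∩ lineThrough Δ p from ⟨hrE, j, hr⟩) hfin)
  have hex : ∀ i : ℕ, ∃ q : Fin d → ℕ,
      (0 < i ∧ ∃ q : Fin d → ℕ, toInt q = toInt p + (i : ℤ) • Δ) →
        toInt q = toInt p + (i : ℤ) • Δ := by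
    intro i
    by_cases h : 0 < i ∧ ∃ q : Fin d → ℕ, toInt q = toInt p + (i : ℤ) • Δ
    · obtain ⟨q, hq⟩ := h.2
      exact ⟨q, fun _ => hq⟩
    · exact ⟨p, fun h' => absurd h' h⟩
  choose f hf using hex
  refine Set.ncard_le_ncard_of_injOn f ?_ ?_ hfin.sdiff
  · intro i hi
    refine ⟨⟨above _ i (by exact_mod_cast hi.1) (hf i hi), i, hf i hi⟩, ?_⟩
    intro heq
    have h := hf i hi
    rw [Set.mem_singleton_iff.mp heq, hr] at h
    have h1 := hinj _ _ h
    have h2 := hi.1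
    omega
  · intro i hi k hk heq
    have h := hf i hi
    rw [heq, hf k hk] at h
    exact_mod_cast (hinj _ _ h).symm

/-- Coordinate form in `ℕ⁴`: it suffices to check the conditions for a subset `F ⊆ E`, and the
point below `p` may be taken to be `p` itself or its immediate predecessor `p - Δ`. -/
theorem mem_deltaOf_four {w x y z : ℤ} (hpos : ∃ i, 0 < (![w, x, y, z] : Fin 4 → ℤ) i)
    (hneg : ∃ j, (![w, x, y, z] : Fin 4 → ℤ) j < 0) {E F : Set (Fin 4 → ℕ)} (hFE : F ⊆ E)
    {p : Fin 4 → ℕ}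
    (above : ∀ q : Fin 4 → ℕ, ∀ i : ℤ, 0 < i → (q 0 : ℤ) = p 0 + i * w →
      (q 1 : ℤ) = p 1 + i * x → (q 2 : ℤ) = p 2 + i * y → (q 3 : ℤ) = p 3 + i * z → q ∈ F)
    (below : p ∈ F ∨ ∃ r ∈ F, (r 0 : ℤ) = p 0 - w ∧ (r 1 : ℤ) = p 1 - x ∧
      (r 2 : ℤ) = p 2 - y ∧ (r 3 : ℤ) = p 3 - z) :
    p ∈ deltaOf ![w, x, y, z] E := by
  refine mem_deltaOf_of_above_of_below hpos hneg ?_ ?_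
  · intro q i hi h
    refine hFE (above q i hi ?_ ?_ ?_ ?_)
    · simpa [toInt] using congrFun h 0
    · simpa [toInt] using congrFun h 1
    · simpa [toInt] using congrFun h 2
    · simpa [toInt] using congrFun h 3
  · rcases below with hp | ⟨r, hr, h0, h1, h2, h3⟩
    · exact ⟨p, hFE hp, 0, le_rfl, by simp⟩
    · refine ⟨r, hFE hr, -1, by norm_num, ?_⟩
      funext k
      fin_cases k <;> simp [toInt, h0, h1, h2, h3, sub_eq_add_neg]

/-- Lower bound after `Δ_1`: degree at most `2μ` apart from the defects with first coordinate `0`,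
together with the extras of first coordinate `1` having two odd coordinates among the others. -/
def stage₁ (μ : ℕ) : Set (Fin 4 → ℕ) :=
  {p | (p 0 + p 1 + p 2 + p 3 ≤ 2 * μ ∧
      ¬ (p 0 + p 1 + p 2 + p 3 = 2 * μ ∧ p 0 = 0 ∧ p 1 % 2 = 0 ∧ p 2 % 2 = 0 ∧ p 3 % 2 = 0)) ∨
    (p 0 + p 1 + p 2 + p 3 = 2 * μ + 1 ∧ p 0 = 1 ∧ p 1 % 2 + p 2 % 2 + p 3 % 2 = 2)}

/-- Lower bound after `Δ_2`: the remaining defects are `(0, 0, c, d)` with `c`, `d` even; the extras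
retained are `(1, 0, c, d)` with `c`, `d` odd and `(1, 1, 0, 2μ - 1)`. -/
def stage₂ (μ : ℕ) : Set (Fin 4 → ℕ) :=
  {p | (p 0 + p 1 + p 2 + p 3 ≤ 2 * μ ∧
      ¬ (p 0 + p 1 + p 2 + p 3 = 2 * μ ∧ p 0 = 0 ∧ p 1 = 0 ∧ p 2 % 2 = 0 ∧ p 3 % 2 = 0)) ∨
    (p 0 + p 1 + p 2 + p 3 = 2 * μ + 1 ∧ p 0 = 1 ∧
      ((p 1 = 0 ∧ p 2 % 2 = 1 ∧ p 3 % 2 = 1) ∨ (p 1 = 1 ∧ p 2 = 0)))}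

/-- Lower bound after `Δ_3`: the remaining defect is `(0, 0, 0, 2μ)` and the extra retained is
`(1, 1, 0, 2μ - 1)`. -/
def stage₃ (μ : ℕ) : Set (Fin 4 → ℕ) :=
  {p | (p 0 + p 1 + p 2 + p 3 ≤ 2 * μ ∧
      ¬ (p 0 + p 1 + p 2 + p 3 = 2 * μ ∧ p 0 = 0 ∧ p 1 = 0 ∧ p 2 = 0)) ∨
    (p 0 + p 1 + p 2 + p 3 = 2 * μ + 1 ∧ p 0 = 1 ∧ p 1 = 1 ∧ p 2 = 0)}

theorem stage₁_subset (μ : ℕ) :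
    stage₁ μ ⊆ deltaOf ![1, -1, -1, -1] (scaleSet (fun _ => 2) (regStaircase 4 μ)) := by
  intro p hp
  simp only [stage₁, Set.mem_ofPred_eq] at hp
  refine mem_deltaOf_four ⟨0, by simp⟩ ⟨1, by simp⟩ subset_rfl ?_ ?_
  · intro q i hi h0 h1 h2 h3
    simp only [scaleSet, regStaircase, Set.mem_ofPred_eq, Fin.sum_univ_four]
    omega
  · by_cases h : p 0 + p 1 + p 2 + p 3 = 2 * μ ∧
      p 0 % 2 = 0 ∧ p 1 % 2 = 0 ∧ p 2 % 2 = 0 ∧ p 3 % 2 = 0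
    · right
      refine ⟨![p 0 - 1, p 1 + 1, p 2 + 1, p 3 + 1], ?_, ?_⟩
      · simp [scaleSet, regStaircase, Fin.sum_univ_four]
        omega
      · simp
        omega
    · left
      simp only [scaleSet, regStaircase, Set.mem_ofPred_eq, Fin.sum_univ_four]
      omega

theorem stage₂_subset (μ : ℕ) {E : Set (Fin 4 → ℕ)} (hE : stage₁ μ ⊆ E) :
    stage₂ μ ⊆ deltaOf ![-1, 1, -1, 0] E := by
  intro p hp
  simp only [stage₂, Set.mem_ofPred_eq] at hp
  refine mem_deltaOf_four ⟨1, by simp⟩ ⟨0, by simp⟩ hE ?_ ?_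
  · intro q i hi h0 h1 h2 h3
    simp only [stage₁, Set.mem_ofPred_eq]
    omega
  · by_cases h : p 0 + p 1 + p 2 + p 3 = 2 * μ ∧
      p 0 = 0 ∧ p 1 % 2 = 0 ∧ p 2 % 2 = 0 ∧ p 3 % 2 = 0
    · right
      refine ⟨![p 0 + 1, p 1 - 1, p 2 + 1, p 3], ?_, ?_⟩
      · simp [stage₁]
        omega
      · simp
        omega
    · left
      simp only [stage₁, Set.mem_ofPred_eq]
      omega

theorem stage₃_subset (μ : ℕ) {E : Set (Fin 4 → ℕ)} (hE : stage₂ μ ⊆ E) :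
    stage₃ μ ⊆ deltaOf ![-1, 0, 1, -1] E := by
  intro p hp
  simp only [stage₃, Set.mem_ofPred_eq] at hp
  refine mem_deltaOf_four ⟨2, by simp⟩ ⟨0, by simp⟩ hE ?_ ?_
  · intro q i hi h0 h1 h2 h3
    simp only [stage₂, Set.mem_ofPred_eq]
    omega
  · by_cases h : p 0 + p 1 + p 2 + p 3 = 2 * μ ∧
      p 0 = 0 ∧ p 1 = 0 ∧ p 2 % 2 = 0 ∧ p 3 % 2 = 0
    · right
      refine ⟨![p 0 + 1, p 1, p 2 - 1, p 3 + 1], ?_, ?_⟩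
      · simp [stage₂]
        omega
      · simp
        omega
    · left
      simp only [stage₂, Set.mem_ofPred_eq]
      omega

theorem regStaircase_subset (μ : ℕ) (hμ : 1 ≤ μ) {E : Set (Fin 4 → ℕ)} (hE : stage₃ μ ⊆ E) :
    regStaircase 4 (2 * μ + 1) ⊆ deltaOf ![-1, -1, 0, 1] E := by
  intro p hp
  simp only [regStaircase, Set.mem_ofPred_eq, Fin.sum_univ_four] at hp
  refine mem_deltaOf_four ⟨3, by simp⟩ ⟨0, by simp⟩ hE ?_ ?_
  · intro q i hi h0 h1 h2 h3
    simp only [stage₃, Set.mem_ofPred_eq]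
    omega
  · by_cases h : p 0 + p 1 + p 2 + p 3 = 2 * μ ∧ p 0 = 0 ∧ p 1 = 0 ∧ p 2 = 0
    · right
      refine ⟨![p 0 + 1, p 1 + 1, p 2, p 3 - 1], ?_, ?_⟩
      · simp [stage₃]
        omega
      · simp
        omega
    · left
      simp only [stage₃, Set.mem_ofPred_eq]
      omega

/-- Initial case `s = 2`, `d = 4` of the key lemma: with `Δ₁ = (1,−1,−1,−1)`,
`Δ₂ = (−1,1,−1,0)`, `Δ₃ = (−1,0,1,−1)` and `Δ₄ = (−1,−1,0,1)` one has
`Δ₄(Δ₃(Δ₂(Δ₁(2·R_μ)))) ⊇ R_{2μ+1}` in `ℕ⁴`. -/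
theorem key_lemma_two_fourth (μ : ℕ) (hμ : 1 ≤ μ) :
    regStaircase 4 (2 * μ + 1) ⊆
      deltaOf ![-1, -1, 0, 1]
        (deltaOf ![-1, 0, 1, -1]
          (deltaOf ![-1, 1, -1, 0]
            (deltaOf ![1, -1, -1, -1]
              (scaleSet (fun _ => 2) (regStaircase 4 μ))))) :=
  regStaircase_subset μ hμ (stage₃_subset μ (stage₂_subset μ (stage₁_subset μ)))
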